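/- Let R be a semiartinian von Neumann regular ring with primitive factors artinian. Then every countably generated weakly R-projective right R-module is projective. -/

import Mathlib

universe u

open Submodule Function

/-- The socle of a module: the supremum of all simple submodules. -/
def moduleSocle (R : Type*) (M : Type*) [Ring R] [AddCommGroup M] [Module R M] :
    Submodule R M :=
  sSup {W : Submodule R M | IsSimpleModule R ↥W}

/-- A ring is right semiartinian if every nonzero quotient of the right module `R_R`
has a nonzero socle. -/
def IsRightSemiartinian (R : Type u) [Ring R] : Prop :=
  ∀ I : Submodule Rᵐᵒᵖ R, I ≠ ⊤ → moduleSocle Rᵐᵒᵖ (R ⧸ I) ≠ ⊥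

/-- The right socle sequence of a ring: `S_0 = 0`, `S_{α+1}/S_α = Soc(R/S_α)`,
and unions at limits. -/
noncomputable def socleSeq (R : Type u) [Ring R] : Ordinal.{u} → Submodule Rᵐᵒᵖ R :=
  fun o => Ordinal.limitRecOn o ⊥
    (fun _ S => Submodule.comap S.mkQ (moduleSocle Rᵐᵒᵖ (R ⧸ S)))
    (fun o _ ih => ⨆ (β : Ordinal.{u}) (h : β < o), ih β h)

/-- `S_α`, viewed as a submodule of `S_{α+1}`; the kernel of the `α`-th layer
epimorphism `π_α : S_{α+1} → S_{α+1}/S_α`. -/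
noncomputable def layerKer (R : Type u) [Ring R] (α : Ordinal.{u}) :
    Submodule Rᵐᵒᵖ ↥(socleSeq R (α + 1)) :=
  (socleSeq R α).comap (socleSeq R (α + 1)).subtype

/-- The `α`-th layer `L_α = S_{α+1}/S_α` of a ring. -/
noncomputable abbrev Layer (R : Type u) [Ring R] (α : Ordinal.{u}) :=
  ↥(socleSeq R (α + 1)) ⧸ layerKer R α

/-- A module `M` is weakly `R`-projective if for each `0 < α ≤ σ`, every homomorphism
`f : M → L_α` with finitely generated image factors through the `α`-th layer
epimorphism `π_α : S_{α+1} → L_α`. -/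
def WeaklyRProjective (R : Type u) [Ring R] (σ : Ordinal.{u})
    (M : Type u) [AddCommGroup M] [Module Rᵐᵒᵖ M] : Prop :=
  ∀ α : Ordinal.{u}, 0 < α → α ≤ σ →
    ∀ f : M →ₗ[Rᵐᵒᵖ] Layer R α, (LinearMap.range f).FG →
      ∃ g : M →ₗ[Rᵐᵒᵖ] ↥(socleSeq R (α + 1)), (layerKer R α).mkQ ∘ₗ g = f

/-- A ring is von Neumann regular if each `r` admits `s` with `r * s * r = r`. -/
def IsVNRegular (R : Type u) [Ring R] : Prop :=
  ∀ r : R, ∃ s : R, r * s * r = r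

/-- The annihilator of a right `R`-module, as a submodule of the right module `R_R`. -/
def rightAnnihilator (R : Type u) [Ring R] (M : Type u) [AddCommGroup M]
    [Module Rᵐᵒᵖ M] : Submodule Rᵐᵒᵖ R where
  carrier := {r : R | ∀ m : M, MulOpposite.op r • m = 0}
  add_mem' := by
    intro a b ha hb m
    rw [MulOpposite.op_add, add_smul, ha m, hb m, add_zero]
  zero_mem' := by
    intro m
    rw [MulOpposite.op_zero, zero_smul]
  smul_mem' := by
    intro c r hr m
    have h : MulOpposite.op (c • r) = c * MulOpposite.op r := by
      rw [MulOpposite.smul_eq_mul_unop, MulOpposite.op_mul, MulOpposite.op_unop]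
    rw [h, mul_smul, hr m, smul_zero]

/-- A ring has (right) primitive factors artinian if, for each right primitive
(two-sided) ideal `P`, i.e. the annihilator of a simple right module, the factor
`R/P` is (right) artinian. -/
def HasPFA (R : Type u) [Ring R] : Prop :=
  ∀ (M : Type u) [AddCommGroup M] [Module Rᵐᵒᵖ M], IsSimpleModule Rᵐᵒᵖ M →
    IsArtinian Rᵐᵒᵖ (R ⧸ rightAnnihilator R M)

/-!
Call `x : M` regular if `φ x • x = x` for some functional `φ`. By McCoy's trick, `x` is regular as
soon as `x - φ x • x` is, for some `φ`. So fix `y` and suppose that `x` lies in `y S_{α+1}`. The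
class of `x` modulo `y S_α` is the image of an element of the semisimple module `L_α`; over a
V-ring, which a regular ring with primitive factors artinian is, finitely generated semisimple
modules are injective, so some `f : M → L_α` with finitely generated image selects at `x` a
preimage of this class. Weak projectivity lifts `f` to `S_{α+1} ⊆ R`, and von Neumann regularity
turns the lift into a functional `φ` with `x - φ x • x` in `y S_α`. Descending along the socle
sequence, every element of `M` is regular. A countably generated module all of whose elements are
regular is projective: splitting off the generators one after the other, as in Gram-Schmidt, gives
a dual basis.
-/

theorem projective_of_dualBasis {A M ι : Type*} [Semiring A] [AddCommMonoid M] [Module A M]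
    (y : ι → M) (ψ : ι → M →ₗ[A] A) (hfin : ∀ m, (support fun i => ψ i m).Finite)
    (hsum : ∀ m, ∑ᶠ i, ψ i m • y i = m) :
    Module.Projective A M := by
  let coords : M →ₗ[A] ι →₀ A :=
    { toFun := fun m => Finsupp.ofSupportFinite (fun i => ψ i m) (hfin m)
      map_add' := fun a b => Finsupp.ext fun i => map_add (ψ i) a b
      map_smul' := fun c a => Finsupp.ext fun i => map_smul (ψ i) c a }
  refine Module.Projective.of_split coords (Finsupp.linearCombination A y) ?_
  ext m
  calc Finsupp.linearCombination A y (coords m)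
      = ∑ i ∈ (coords m).support, ψ i m • y i := Finsupp.linearCombination_apply _ _
    _ = ∑ᶠ i, ψ i m • y i := (finsum_eq_sum_of_support_subset _ fun i hi =>
        Finsupp.mem_support_iff.2 fun h0 : ψ i m = 0 => hi (by simp only [h0, zero_smul])).symm
    _ = m := hsum m

section RegularElements

variable {A M : Type*} [Ring A] [AddCommGroup M] [Module A M]

variable (A) in
/-- An element of a left module is regular in the sense of Zelmanowitz if it is fixed by its own
value under some functional. For `M = A` this is von Neumann regularity of the element. -/
def IsZelmanowitzRegular (x : M) : Prop :=
  ∃ φ : M →ₗ[A] A, φ x • x = x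

theorem IsZelmanowitzRegular.zero : IsZelmanowitzRegular A (0 : M) :=
  ⟨0, smul_zero _⟩

theorem IsZelmanowitzRegular.of_sub_smul {x : M} (φ : M →ₗ[A] A)
    (h : IsZelmanowitzRegular A (x - φ x • x)) : IsZelmanowitzRegular A x := by
  obtain ⟨φ', hφ'⟩ := h
  let T : M →ₗ[A] M := LinearMap.id - LinearMap.toSpanSingleton A M x ∘ₗ φ
  refine ⟨φ + LinearMap.toSpanSingleton A A (1 - φ x) ∘ₗ φ' ∘ₗ T, ?_⟩
  calc (φ x + φ' (x - φ x • x) * (1 - φ x)) • x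
      = φ x • x + φ' (x - φ x • x) • (x - φ x • x) := by
        rw [add_smul, mul_smul, sub_smul, one_smul]
    _ = x := by rw [hφ', add_sub_cancel]

section Residual

variable (φ : M → M →ₗ[A] A) (x : ℕ → M)

/-- What remains of an element after the first `n` steps of the Gram-Schmidt process applied to the
sequence `x`, where `φ y` is the functional used to split off the element `y`. -/
noncomputable def splitResidual : ℕ → M →ₗ[A] M
  | 0 => LinearMap.id
  | n + 1 => (LinearMap.id - LinearMap.toSpanSingleton A M (splitResidual n (x n)) ∘ₗ
      φ (splitResidual n (x n))) ∘ₗ splitResidual n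

/-- The functional giving the coefficient split off in step `n` of the Gram-Schmidt process. -/
noncomputable def splitCoeff (n : ℕ) : M →ₗ[A] A :=
  φ (splitResidual φ x n (x n)) ∘ₗ splitResidual φ x n

theorem splitCoeff_smul_eq_sub (n : ℕ) (m : M) :
    splitCoeff φ x n m • splitResidual φ x n (x n) =
      splitResidual φ x n m - splitResidual φ x (n + 1) m :=
  (sub_sub_cancel _ _).symm

theorem ker_splitResidual_mono : Monotone fun n => LinearMap.ker (splitResidual φ x n) :=
  monotone_nat_of_le_succ fun _ => LinearMap.ker_le_ker_comp _ _

variable {φ x}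

theorem splitCoeff_eq_zero {n k : ℕ} (hnk : n ≤ k) {m : M} (h : splitResidual φ x n m = 0) :
    splitCoeff φ x k m = 0 := by
  have hk : splitResidual φ x k m = 0 := ker_splitResidual_mono φ x hnk h
  rw [splitCoeff, LinearMap.comp_apply, hk, map_zero]

theorem splitResidual_succ_self (hφ : ∀ y, φ y y • y = y) (n : ℕ) :
    splitResidual φ x (n + 1) (x n) = 0 := by
  have h := splitCoeff_smul_eq_sub φ x n (x n)
  rwa [splitCoeff, LinearMap.comp_apply, hφ, eq_comm, sub_eq_self] at h

theorem exists_splitResidual_eq_zero (hφ : ∀ y, φ y y • y = y) (hx : span A (Set.range x) = ⊤)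
    (m : M) : ∃ n, splitResidual φ x n m = 0 := by
  let K : ℕ →o Submodule A M := ⟨_, ker_splitResidual_mono φ x⟩
  have hK : ⨆ n, K n = ⊤ := by
    rw [eq_top_iff, ← hx, span_le]
    rintro _ ⟨n, rfl⟩
    exact mem_iSup_of_mem (p := K) (n + 1) (splitResidual_succ_self hφ n)
  exact (mem_iSup_of_chain K m).1 (hK ▸ mem_top)

end Residual

theorem projective_of_forall_isZelmanowitzRegular (hreg : ∀ x : M, IsZelmanowitzRegular A x)
    {S : Set M} (hS : S.Countable) (hspan : span A S = ⊤) : Module.Projective A M := by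
  obtain ⟨x, hSx⟩ := Set.countable_iff_exists_subset_range.1 hS
  have hx : span A (Set.range x) = ⊤ := top_unique (hspan ▸ span_mono hSx)
  choose φ hφ using hreg
  have hsupp (m : M) : ∃ n, splitResidual φ x n m = 0 ∧
      (support fun k => splitCoeff φ x k m) ⊆ Finset.range n := by
    obtain ⟨n, hn⟩ := exists_splitResidual_eq_zero hφ hx m
    refine ⟨n, hn, fun k hk => Finset.mem_coe.2 (Finset.mem_range.2 ?_)⟩
    exact lt_of_not_ge fun hnk => hk (splitCoeff_eq_zero hnk hn)
  refine projective_of_dualBasis (fun n => splitResidual φ x n (x n)) (splitCoeff φ x)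
    (fun m => ?_) (fun m => ?_)
  · obtain ⟨n, -, hn⟩ := hsupp m
    exact (Finset.finite_toSet _).subset hn
  · obtain ⟨n, h0, hn⟩ := hsupp m
    calc ∑ᶠ k, splitCoeff φ x k m • splitResidual φ x k (x k)
        = ∑ k ∈ Finset.range n, splitCoeff φ x k m • splitResidual φ x k (x k) :=
          finsum_eq_sum_of_support_subset _ ((support_smul_subset_left _ _).trans hn)
      _ = ∑ k ∈ Finset.range n, (splitResidual φ x k m - splitResidual φ x (k + 1) m) :=
          Finset.sum_congr rfl fun k _ => splitCoeff_smul_eq_sub φ x k m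
      _ = m := by rw [Finset.sum_range_sub', h0, sub_zero]; rfl

end RegularElements

section VRings

/-- A ring is a left V-ring if all its simple left modules are injective. -/
def IsLeftVRing (A : Type u) [Ring A] : Prop :=
  ∀ (S : Type u) [AddCommGroup S] [Module A S], IsSimpleModule A S → Module.Injective A S

theorem exists_comp_eq_of_ker_le_ker {A X N W : Type*} [Ring A] [AddCommGroup X] [Module A X]
    [AddCommGroup N] [Module A N] [AddCommGroup W] [Module A W] [IsSemisimpleModule A W]
    (p : X →ₗ[A] W) (g : X →ₗ[A] N) (h : LinearMap.ker p ≤ LinearMap.ker g) :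
    ∃ k : W →ₗ[A] N, k ∘ₗ p = g := by
  obtain ⟨k, hk⟩ := IsSemisimpleModule.extension_property ((LinearMap.ker p).liftQ p le_rfl)
    (LinearMap.ker_eq_bot.1 (ker_liftQ_eq_bot' _ _ rfl)) ((LinearMap.ker p).liftQ g h)
  exact ⟨k, LinearMap.ext fun x => LinearMap.congr_fun hk ((LinearMap.ker p).mkQ x)⟩

theorem isSemisimpleModule_quotient_annihilator (A S : Type*) [Ring A] [AddCommGroup S]
    [Module A S] [IsSemisimpleModule A S] [IsArtinian A (A ⧸ Module.annihilator A S)] :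
    IsSemisimpleModule A (A ⧸ Module.annihilator A S) := by
  rw [IsArtinian.isSemisimpleModule_iff_jacobson]
  let ev : A →ₗ[A] S → S := LinearMap.pi (LinearMap.toSpanSingleton A S)
  have hev : Module.annihilator A S = LinearMap.ker ev :=
    Submodule.ext fun _ => Module.mem_annihilator.trans funext_iff.symm
  exact Module.jacobson_eq_bot_of_injective ((Module.annihilator A S).liftQ ev hev.le)
    (LinearMap.ker_eq_bot.1 (ker_liftQ_eq_bot' _ _ hev))
    (Module.jacobson_pi_eq_bot _ _ fun _ => IsSemisimpleModule.jacobson_eq_bot A _)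

variable {A : Type u} [Ring A]

theorem IsVNRegular.injective_of_isSemisimpleModule_quotient_annihilator (hA : IsVNRegular A)
    (S : Type*) [AddCommGroup S] [Module A S]
    [IsSemisimpleModule A (A ⧸ Module.annihilator A S)] : Module.Injective A S := by
  refine Module.Baer.injective fun I g => ?_
  let q := (Module.annihilator A S).mkQ
  have hker : LinearMap.ker (q ∘ₗ I.subtype) ≤ LinearMap.ker g := by
    intro a ha
    have ha0 : (a : A) ∈ Module.annihilator A S := (Submodule.Quotient.mk_eq_zero _).1 ha
    obtain ⟨s, hs⟩ := hA a
    have hfix : a = (a : A) • s • a := Subtype.ext (by simp [← mul_assoc, hs])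
    rw [LinearMap.mem_ker, hfix, map_smul]
    exact Module.mem_annihilator.1 ha0 _
  obtain ⟨k, hk⟩ := exists_comp_eq_of_ker_le_ker (q ∘ₗ I.subtype) g hker
  exact ⟨k ∘ₗ q, fun a ha => LinearMap.congr_fun hk ⟨a, ha⟩⟩

theorem IsLeftVRing.injective_of_finite_of_isSemisimpleModule (hA : IsLeftVRing A) (W : Type u)
    [AddCommGroup W] [Module A W] [IsSemisimpleModule A W] [Module.Finite A W] :
    Module.Injective A W := by
  obtain ⟨n, S, e, hS⟩ := IsSemisimpleModule.exists_linearEquiv_fin_dfinsupp A W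
  have (i : Fin n) : Module.Injective A (S i) := hA _ (hS i)
  let e' : W ≃ₗ[A] Π i, S i := e.trans (DFinsupp.linearEquivFunOnFintype (R := A))
  exact (Module.Baer.of_injective inferInstance |>.of_equiv e'.symm).injective

theorem IsLeftVRing.exists_fg_range_apply_eq (hA : IsLeftVRing A) {Q : Type u} {N : Type*}
    [AddCommGroup Q] [Module A Q] [IsSemisimpleModule A Q] [AddCommGroup N] [Module A N]
    (l : Q →ₗ[A] N) {y : N} (hy : y ∈ LinearMap.range l) :
    ∃ θ : N →ₗ[A] Q, (LinearMap.range θ).FG ∧ l (θ y) = y := by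
  have hle : span A {y} ≤ LinearMap.range l := (span_singleton_le_iff_mem _ _).2 hy
  obtain ⟨h, hh⟩ := IsSemisimpleModule.lifting_property l.rangeRestrict
    l.surjective_rangeRestrict (inclusion hle)
  have hinj := hA.injective_of_finite_of_isSemisimpleModule (LinearMap.range h)
  obtain ⟨k, hk⟩ := Module.Injective.extension_property A (LinearMap.range h) _ _
    (span A {y}).subtype (injective_subtype _) h.rangeRestrict
  let y' : span A {y} := ⟨y, mem_span_singleton_self y⟩
  have hky : (k y : Q) = h y' := congrArg Subtype.val (LinearMap.congr_fun hk y')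
  refine ⟨(LinearMap.range h).subtype ∘ₗ k, ?_, ?_⟩
  · rw [LinearMap.range_comp]
    exact (IsNoetherian.noetherian _).map _
  · calc l (k y) = l (h y') := by rw [hky]
      _ = y := congrArg Subtype.val (LinearMap.congr_fun hh y')

theorem IsLeftVRing.exists_sub_smul_mem_map_ker (hA : IsLeftVRing A) (hreg : IsVNRegular A)
    {P M : Type*} {Q : Type u} [AddCommGroup P] [Module A P] [AddCommGroup M] [Module A M]
    [AddCommGroup Q] [Module A Q] [IsSemisimpleModule A Q]
    {j : P →ₗ[A] A} (hj : Injective j) (π : P →ₗ[A] Q)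
    (hlift : ∀ f : M →ₗ[A] Q, (LinearMap.range f).FG → ∃ g : M →ₗ[A] P, π ∘ₗ g = f)
    (F : P →ₗ[A] M) {x : M} (hx : x ∈ LinearMap.range F) :
    ∃ φ : M →ₗ[A] A, x - φ x • x ∈ (LinearMap.ker π).map F := by
  let K := (LinearMap.ker π).map F
  obtain ⟨l, hl⟩ : ∃ l : Q →ₗ[A] M ⧸ K, l ∘ₗ π = K.mkQ ∘ₗ F :=
    exists_comp_eq_of_ker_le_ker π _ fun p hp =>
      (Submodule.Quotient.mk_eq_zero K).2 (mem_map_of_mem hp)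
  have hxl : K.mkQ x ∈ LinearMap.range l := by
    obtain ⟨p, rfl⟩ := hx
    exact ⟨π p, LinearMap.congr_fun hl p⟩
  obtain ⟨θ, hθ, hlθ⟩ := hA.exists_fg_range_apply_eq l hxl
  obtain ⟨g, hg⟩ := hlift (θ ∘ₗ K.mkQ) (by rwa [LinearMap.range_comp_of_range_eq_top _ K.range_mkQ])
  obtain ⟨c, hc⟩ := hreg (j (g x))
  let φ : M →ₗ[A] A := LinearMap.toSpanSingleton A A c ∘ₗ j ∘ₗ g
  have hφx : φ x = j (g x) * c := rfl
  have hgx : g (x - φ x • x) = 0 := hj <| by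
    rw [map_sub, map_smul, map_sub, map_smul, hφx, smul_eq_mul, hc, sub_self, map_zero]
  refine ⟨φ, (Submodule.Quotient.mk_eq_zero K).1 ?_⟩
  calc K.mkQ (x - φ x • x) = l (θ (K.mkQ (x - φ x • x))) := by
        simp only [map_sub, map_smul, hlθ]
    _ = l (π (g (x - φ x • x))) := congrArg l (LinearMap.congr_fun hg _).symm
    _ = 0 := by rw [hgx, map_zero, map_zero]

end VRings

section RightModules

variable {R : Type u} [Ring R]

theorem IsVNRegular.op (hR : IsVNRegular R) : IsVNRegular Rᵐᵒᵖ := fun r => by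
  obtain ⟨s, hs⟩ := hR r.unop
  exact ⟨.op s, MulOpposite.unop_injective (by simp [← mul_assoc, hs])⟩

theorem HasPFA.isArtinian_quotient_annihilator (hR : HasPFA R) (S : Type u) [AddCommGroup S]
    [Module Rᵐᵒᵖ S] [hS : IsSimpleModule Rᵐᵒᵖ S] :
    IsArtinian Rᵐᵒᵖ (Rᵐᵒᵖ ⧸ Module.annihilator Rᵐᵒᵖ S) := by
  have := hR S hS
  have hle : rightAnnihilator R S ≤ Submodule.comap
      (MulOpposite.opLinearEquiv Rᵐᵒᵖ).toLinearMap (Module.annihilator Rᵐᵒᵖ S) :=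
    fun _ hr => Module.mem_annihilator.2 hr
  refine isArtinian_of_surjective _ (mapQ _ _ _ hle) fun y => ?_
  obtain ⟨r, rfl⟩ := mkQ_surjective _ y
  exact ⟨(rightAnnihilator R S).mkQ r.unop, rfl⟩

theorem IsVNRegular.isLeftVRing_op_of_hasPFA (hvnr : IsVNRegular R) (hpfa : HasPFA R) :
    IsLeftVRing Rᵐᵒᵖ := fun S _ _ _ => by
  have := hpfa.isArtinian_quotient_annihilator S
  have := isSemisimpleModule_quotient_annihilator Rᵐᵒᵖ S
  exact hvnr.op.injective_of_isSemisimpleModule_quotient_annihilator S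

end RightModules

section SocleSequence

theorem isSemisimpleModule_moduleSocle (A M : Type*) [Ring A] [AddCommGroup M] [Module A M] :
    IsSemisimpleModule A (moduleSocle A M) := by
  rw [moduleSocle, sSup_eq_iSup]
  exact isSemisimpleModule_biSup_of_isSemisimpleModule_submodule fun W (hW : IsSimpleModule A W) =>
    inferInstance

variable (R : Type u) [Ring R]

theorem socleSeq_zero : socleSeq R 0 = ⊥ :=
  Ordinal.limitRecOn_zero _ _ _

theorem socleSeq_add_one (α : Ordinal.{u}) :
    socleSeq R (α + 1) =
      (moduleSocle Rᵐᵒᵖ (R ⧸ socleSeq R α)).comap (socleSeq R α).mkQ :=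
  Ordinal.limitRecOn_add_one _ _ _ _

theorem socleSeq_of_isSuccLimit {α : Ordinal.{u}} (hα : Order.IsSuccLimit α) :
    socleSeq R α = ⨆ (β : Ordinal.{u}) (_ : β < α), socleSeq R β :=
  Ordinal.limitRecOn_limit _ _ _ _ hα

theorem socleSeq_le_add_one (α : Ordinal.{u}) : socleSeq R α ≤ socleSeq R (α + 1) := by
  rw [socleSeq_add_one]
  exact le_comap_mkQ _ _

theorem socleSeq_mono : Monotone (socleSeq R) := by
  intro β α hβα
  induction α using Ordinal.limitRecOn with
  | zero => rw [nonpos_iff_eq_zero.1 hβα]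
  | add_one α ih =>
    rcases hβα.eq_or_lt with rfl | h
    · rfl
    · exact (ih (Order.lt_add_one_iff.1 h)).trans (socleSeq_le_add_one R α)
  | limit α hα _ =>
    rcases hβα.eq_or_lt with rfl | h
    · rfl
    · rw [socleSeq_of_isSuccLimit R hα]
      exact le_iSup₂_of_le β h le_rfl

variable {R}

theorem exists_lt_mem_socleSeq {α : Ordinal.{u}} (hα : Order.IsSuccLimit α) {r : R}
    (hr : r ∈ socleSeq R α) : ∃ β < α, r ∈ socleSeq R β := by
  have : Nonempty (Set.Iio α) := ⟨⟨0, hα.bot_lt⟩⟩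
  have hdir : Directed (· ≤ ·) fun β : Set.Iio α => socleSeq R β :=
    Monotone.directed_le fun _ _ h => socleSeq_mono R h
  rw [socleSeq_of_isSuccLimit R hα, iSup_subtype'] at hr
  obtain ⟨β, hβ⟩ := (mem_iSup_of_directed _ hdir).1 hr
  exact ⟨β, β.2, hβ⟩

variable (R)

theorem isSemisimpleModule_layer (α : Ordinal.{u}) : IsSemisimpleModule Rᵐᵒᵖ (Layer R α) := by
  have := isSemisimpleModule_moduleSocle Rᵐᵒᵖ (R ⧸ socleSeq R α)
  let f : socleSeq R (α + 1) →ₗ[Rᵐᵒᵖ] moduleSocle Rᵐᵒᵖ (R ⧸ socleSeq R α) :=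
    (socleSeq R α).mkQ.restrict (socleSeq_add_one R α).le
  have hf : layerKer R α = LinearMap.ker f := by
    rw [LinearMap.ker_restrict, ker_mkQ, layerKer]
  exact IsSemisimpleModule.of_injective ((layerKer R α).liftQ f hf.le)
    (LinearMap.ker_eq_bot.1 (ker_liftQ_eq_bot' _ _ hf))

theorem bijective_mkQ_layerKer_zero : Bijective (layerKer R 0).mkQ := by
  refine ⟨LinearMap.ker_eq_bot.1 ?_, mkQ_surjective _⟩
  rw [ker_mkQ, layerKer, socleSeq_zero, comap_bot, ker_subtype]

end SocleSequence

section WeaklyRProjective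

variable {R : Type u} [Ring R] {σ : Ordinal.{u}} {M : Type u} [AddCommGroup M] [Module Rᵐᵒᵖ M]

theorem WeaklyRProjective.exists_lift (hM : WeaklyRProjective R σ M) {α : Ordinal.{u}} (hα : α ≤ σ)
    (f : M →ₗ[Rᵐᵒᵖ] Layer R α) (hf : (LinearMap.range f).FG) :
    ∃ g : M →ₗ[Rᵐᵒᵖ] socleSeq R (α + 1), (layerKer R α).mkQ ∘ₗ g = f := by
  rcases eq_zero_or_pos α with rfl | h0
  · let e := LinearEquiv.ofBijective _ (bijective_mkQ_layerKer_zero R)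
    exact ⟨e.symm ∘ₗ f, LinearMap.ext fun m => e.apply_symm_apply (f m)⟩
  · exact hM α h0 hα f hf

theorem WeaklyRProjective.isZelmanowitzRegular_of_mem_map_socleSeq (hM : WeaklyRProjective R σ M)
    (hvnr : IsVNRegular R) (hV : IsLeftVRing Rᵐᵒᵖ) (F : R →ₗ[Rᵐᵒᵖ] M) {α : Ordinal.{u}}
    (hα : α ≤ σ + 1) {x : M} (hx : x ∈ (socleSeq R α).map F) : IsZelmanowitzRegular Rᵐᵒᵖ x := by
  induction α using Ordinal.limitRecOn generalizing x with
  | zero =>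
    rw [socleSeq_zero, Submodule.map_bot, mem_bot] at hx
    exact hx ▸ .zero
  | limit α hα' ih =>
    obtain ⟨r, hr, rfl⟩ := hx
    obtain ⟨β, hβ, hrβ⟩ := exists_lt_mem_socleSeq hα' hr
    exact ih β hβ (hβ.le.trans hα) (mem_map_of_mem hrβ)
  | add_one β ih =>
    have hβ : β ≤ σ := by simpa using hα
    have := isSemisimpleModule_layer R β
    let ι := (socleSeq R (β + 1)).subtype
    let j : socleSeq R (β + 1) →ₗ[Rᵐᵒᵖ] Rᵐᵒᵖ := (MulOpposite.opLinearEquiv Rᵐᵒᵖ).toLinearMap ∘ₗ ι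
    have hj : Injective j := MulOpposite.op_injective.comp (injective_subtype _)
    have hxF : x ∈ LinearMap.range (F ∘ₗ ι) := by rwa [LinearMap.range_comp, range_subtype]
    obtain ⟨φ, hφ⟩ := hV.exists_sub_smul_mem_map_ker hvnr.op hj (layerKer R β).mkQ
      (fun f => hM.exists_lift hβ f) (F ∘ₗ ι) hxF
    refine .of_sub_smul φ (ih (hβ.trans le_self_add) ?_)
    rw [ker_mkQ, map_comp] at hφ
    exact Submodule.map_mono (map_comap_le _ _) hφ

theorem WeaklyRProjective.isZelmanowitzRegular (hM : WeaklyRProjective R σ M)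
    (hvnr : IsVNRegular R) (hV : IsLeftVRing Rᵐᵒᵖ) (hσ : socleSeq R (σ + 1) = ⊤) (x : M) :
    IsZelmanowitzRegular Rᵐᵒᵖ x := by
  let F : R →ₗ[Rᵐᵒᵖ] M :=
    LinearMap.toSpanSingleton Rᵐᵒᵖ M x ∘ₗ (MulOpposite.opLinearEquiv Rᵐᵒᵖ).toLinearMap
  exact hM.isZelmanowitzRegular_of_mem_map_socleSeq hvnr hV F le_rfl ⟨1, hσ ▸ mem_top, one_smul _ x⟩

end WeaklyRProjective

theorem projective_of_countable_weaklyRProjective_general (R : Type u) [Ring R]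
    (hvnr : IsVNRegular R) (hV : IsLeftVRing Rᵐᵒᵖ)
    (σ : Ordinal.{u}) (hσ : socleSeq R (σ + 1) = ⊤)
    (M : Type u) [AddCommGroup M] [Module Rᵐᵒᵖ M]
    (hcg : ∃ S : Set M, S.Countable ∧ Submodule.span Rᵐᵒᵖ S = ⊤)
    (hM : WeaklyRProjective R σ M) :
    Module.Projective Rᵐᵒᵖ M := by
  obtain ⟨S, hS, hspan⟩ := hcg
  exact projective_of_forall_isZelmanowitzRegular (hM.isZelmanowitzRegular hvnr hV hσ) hS hspan

/-- Lemma 8(2) of the paper: over a semiartinian von Neumann regular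
ring with primitive factors artinian, every countably generated weakly `R`-projective
module is projective. -/
theorem projective_of_countable_weaklyRProjective (R : Type u) [Ring R]
    (hsa : IsRightSemiartinian R) (hvnr : IsVNRegular R) (hpfa : HasPFA R)
    (σ : Ordinal.{u}) (hσ : IsLeast {o : Ordinal.{u} | socleSeq R o = ⊤} (σ + 1))
    (M : Type u) [AddCommGroup M] [Module Rᵐᵒᵖ M]
    (hcg : ∃ S : Set M, S.Countable ∧ Submodule.span Rᵐᵒᵖ S = ⊤)
    (hM : WeaklyRProjective R σ M) :
    Module.Projective Rᵐᵒᵖ M := by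
  exact projective_of_countable_weaklyRProjective_general R hvnr
    (hvnr.isLeftVRing_op_of_hasPFA hpfa) σ hσ.1 M hcg hM
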